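/- arXiv:1712.05438 — 2 statements merged into one kernel-verified Lean document; each statement's English description precedes it below -/
import Mathlib

section
/- Let μ be a Borel probability measure on Θ, α > 0, and define the smooth margin ψ_α(μ) = −α log( (1/N) Σ_{j=1}^N exp(−y_j h_μ(x_j)/α) ) for a sample S = {(x_j,y_j)}_{j=1}^N. If ψ_α(μ) > 0, then for every ρ with 0 < ρ < ψ_α(μ), the empirical margin distribution satisfies (1/N) Σ_{j=1}^N 1[y_j h_μ(x_j) ≤ ρ] ≤ ( exp((1 − ψ_α(μ))/α) − 1 ) / ( exp((1 − ρ)/α) − 1 ). -/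
open MeasureTheory

/-! The function `z ↦ exp ((1 - z) / α) - 1` is decreasing and is nonnegative on margins, which are
at most `1`. The normalisation of the smooth margin `ψ` makes its mean over the sample exactly
`exp ((1 - ψ) / α) - 1`, so the bound is Markov's inequality for this function at level `ρ`. -/

section SmoothMargin

variable {Ω : Type*} [MeasurableSpace Ω] {P : Measure Ω} {m : Ω → ℝ} {α b c : ℝ}

/-- The smooth margin at temperature `α` of a random margin `m` on `(Ω, P)`, a smooth surrogate for
the minimal margin. The empirical `ψ_α` is the case where `P` is uniform on the sample indices. -/
noncomputable def smoothMargin (α : ℝ) (m : Ω → ℝ) (P : Measure Ω) : ℝ :=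
  -α * Real.log (∫ ω, Real.exp (-m ω / α) ∂P)

theorem exp_sub_div_eq_mul (b z α : ℝ) :
    Real.exp ((b - z) / α) = Real.exp (b / α) * Real.exp (-z / α) := by
  rw [← Real.exp_add]
  ring_nf

theorem integrable_exp_sub_div (hint : Integrable (fun ω ↦ Real.exp (-m ω / α)) P) (b : ℝ) :
    Integrable (fun ω ↦ Real.exp ((b - m ω) / α)) P := by
  simpa only [exp_sub_div_eq_mul] using hint.const_mul (Real.exp (b / α))

theorem integral_exp_sub_div_eq_exp_sub_smoothMargin_div [NeZero P] (hα : α ≠ 0)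
    (hint : Integrable (fun ω ↦ Real.exp (-m ω / α)) P) (b : ℝ) :
    ∫ ω, Real.exp ((b - m ω) / α) ∂P = Real.exp ((b - smoothMargin α m P) / α) := by
  have hlog : -smoothMargin α m P / α = Real.log (∫ ω, Real.exp (-m ω / α) ∂P) := by
    simp only [smoothMargin]
    field_simp
  rw [exp_sub_div_eq_mul b (smoothMargin α m P), hlog, Real.exp_log (integral_exp_pos hint)]
  simp only [exp_sub_div_eq_mul, integral_const_mul]

variable [IsProbabilityMeasure P]

theorem smoothMargin_le_of_ae_le (hα : 0 < α) (hm : ∀ᵐ ω ∂P, m ω ≤ b)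
    (hint : Integrable (fun ω ↦ Real.exp (-m ω / α)) P) : smoothMargin α m P ≤ b := by
  have hone : 1 ≤ Real.exp ((b - smoothMargin α m P) / α) := calc
    1 = ∫ _, (1 : ℝ) ∂P := by simp
    _ ≤ ∫ ω, Real.exp ((b - m ω) / α) ∂P := by
      refine integral_mono_ae (integrable_const _) (integrable_exp_sub_div hint b) ?_
      filter_upwards [hm] with ω hω
      exact Real.one_le_exp (div_nonneg (sub_nonneg.2 hω) hα.le)
    _ = _ := integral_exp_sub_div_eq_exp_sub_smoothMargin_div hα.ne' hint b
  rwa [Real.one_le_exp_iff, le_div_iff₀ hα, zero_mul, sub_nonneg] at hone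

theorem measureReal_le_le_exp_sub_smoothMargin (hα : 0 < α) (hcb : c < b)
    (hm : ∀ᵐ ω ∂P, m ω ≤ b) (hint : Integrable (fun ω ↦ Real.exp (-m ω / α)) P) :
    P.real {ω | m ω ≤ c} ≤
      (Real.exp ((b - smoothMargin α m P) / α) - 1) / (Real.exp ((b - c) / α) - 1) := by
  have hpos : 0 < Real.exp ((b - c) / α) - 1 :=
    sub_pos.2 (Real.one_lt_exp_iff.2 (div_pos (sub_pos.2 hcb) hα))
  have hint_b := integrable_exp_sub_div hint b
  have hnonneg : 0 ≤ᵐ[P] fun ω ↦ Real.exp ((b - m ω) / α) - 1 := by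
    filter_upwards [hm] with ω hω
    exact sub_nonneg.2 (Real.one_le_exp (div_nonneg (sub_nonneg.2 hω) hα.le))
  have hlevel : {ω | m ω ≤ c} =
      {ω | Real.exp ((b - c) / α) - 1 ≤ Real.exp ((b - m ω) / α) - 1} := by
    ext ω
    simp only [Set.mem_ofPred_eq, sub_le_sub_iff_right, Real.exp_le_exp,
      div_le_div_iff_of_pos_right hα, sub_le_sub_iff_left]
  rw [le_div_iff₀' hpos]
  calc
    _ ≤ ∫ ω, (Real.exp ((b - m ω) / α) - 1) ∂P := by
      rw [hlevel]
      exact mul_meas_ge_le_integral_of_nonneg hnonneg (hint_b.sub (integrable_const 1)) _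
    _ = _ := by
      rw [integral_sub hint_b (integrable_const 1),
        integral_exp_sub_div_eq_exp_sub_smoothMargin_div hα.ne' hint b]
      simp

end SmoothMargin

section EnsembleMargin

variable {X Θ : Type*} [MeasurableSpace Θ] {h : Θ → X → ℝ} {μ : Measure Θ}

/-- The margin `y * h_μ(x)` of the infinite ensemble `h_μ(x) = E_{θ∼μ}[h θ x]` at a labelled
example `z = (x, y)`; labels are encoded as real numbers. -/
noncomputable def ensembleMargin (h : Θ → X → ℝ) (μ : Measure Θ) (z : X × ℝ) : ℝ :=
  z.2 * ∫ θ, h θ z.1 ∂μ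

theorem measurable_ensembleMargin [MeasurableSpace X] [SFinite μ]
    (hmeas : Measurable (Function.uncurry h)) : Measurable (ensembleMargin h μ) :=
  measurable_snd.mul
    (hmeas.stronglyMeasurable.integral_prod_left.measurable.comp measurable_fst)

variable [IsProbabilityMeasure μ]

theorem abs_ensembleMargin_le_one {z : X × ℝ} (hbdd : ∀ᵐ θ ∂μ, |h θ z.1| ≤ 1)
    (hz : |z.2| ≤ 1) : |ensembleMargin h μ z| ≤ 1 := by
  have hint : |∫ θ, h θ z.1 ∂μ| ≤ 1 := by
    simpa using norm_integral_le_of_norm_le_const (f := fun θ ↦ h θ z.1) hbdd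
  rw [ensembleMargin, abs_mul]
  exact mul_le_one₀ hz (abs_nonneg _) hint

variable {Ω : Type*} [MeasurableSpace Ω] {P : Measure Ω} {S : Ω → X × ℝ}

theorem ae_abs_ensembleMargin_le_one (hbdd : ∀ θ x, |h θ x| ≤ 1)
    (hy : ∀ᵐ ω ∂P, |(S ω).2| ≤ 1) : ∀ᵐ ω ∂P, |ensembleMargin h μ (S ω)| ≤ 1 :=
  hy.mono fun ω hω ↦ abs_ensembleMargin_le_one (ae_of_all μ fun θ ↦ hbdd θ (S ω).1) hω

variable [MeasurableSpace X]

theorem integrable_exp_neg_ensembleMargin_div [IsFiniteMeasure P]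
    (hmeas : Measurable (Function.uncurry h))
    (hbdd : ∀ θ x, |h θ x| ≤ 1) (hS : AEMeasurable S P) (hy : ∀ᵐ ω ∂P, |(S ω).2| ≤ 1) (α : ℝ) :
    Integrable (fun ω ↦ Real.exp (-ensembleMargin h μ (S ω) / α)) P := by
  have hexp := ProbabilityTheory.integrable_exp_mul_of_mem_Icc (t := -α⁻¹)
    ((measurable_ensembleMargin (μ := μ) hmeas).comp_aemeasurable hS)
    ((ae_abs_ensembleMargin_le_one hbdd hy).mono fun _ ↦ abs_le.1)
  simpa only [Function.comp_apply, neg_mul, ← div_eq_inv_mul, ← neg_div] using hexp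

variable [IsProbabilityMeasure P] {α ρ : ℝ}

theorem smoothMargin_ensembleMargin_le_one (hmeas : Measurable (Function.uncurry h))
    (hbdd : ∀ θ x, |h θ x| ≤ 1) (hS : AEMeasurable S P) (hy : ∀ᵐ ω ∂P, |(S ω).2| ≤ 1)
    (hα : 0 < α) : smoothMargin α (fun ω ↦ ensembleMargin h μ (S ω)) P ≤ 1 :=
  smoothMargin_le_of_ae_le hα
    ((ae_abs_ensembleMargin_le_one hbdd hy).mono fun _ ↦ le_of_abs_le)
    (integrable_exp_neg_ensembleMargin_div hmeas hbdd hS hy α)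

theorem smooth_margin_bound_general (hmeas : Measurable (Function.uncurry h))
    (hbdd : ∀ θ x, |h θ x| ≤ 1) (hS : AEMeasurable S P) (hy : ∀ᵐ ω ∂P, |(S ω).2| ≤ 1)
    (hα : 0 < α) (hρ : ρ < 1) :
    P.real {ω | ensembleMargin h μ (S ω) ≤ ρ} ≤
      (Real.exp ((1 - smoothMargin α (fun ω ↦ ensembleMargin h μ (S ω)) P) / α) - 1) /
        (Real.exp ((1 - ρ) / α) - 1) :=
  measureReal_le_le_exp_sub_smoothMargin hα hρ
    ((ae_abs_ensembleMargin_le_one hbdd hy).mono fun _ ↦ le_of_abs_le)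
    (integrable_exp_neg_ensembleMargin_div hmeas hbdd hS hy α)

end EnsembleMargin

section Uniform

open ProbabilityTheory

variable {ι : Type*} [Fintype ι] [MeasurableSpace ι] [MeasurableSingletonClass ι]

theorem integral_uniformOn_univ {E : Type*} [NormedAddCommGroup E] [NormedSpace ℝ E]
    [CompleteSpace E] (f : ι → E) :
    ∫ i, f i ∂uniformOn Set.univ = (Fintype.card ι : ℝ)⁻¹ • ∑ i, f i := by
  simp [uniformOn, ProbabilityTheory.cond, integral_smul_measure, integral_count]

theorem measureReal_uniformOn_univ (p : ι → Prop) [DecidablePred p] :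
    (uniformOn Set.univ).real {i | p i} =
      (Fintype.card ι : ℝ)⁻¹ * ∑ i, if p i then (1 : ℝ) else 0 := by
  rw [← integral_indicator_one (Set.toFinite _).measurableSet, integral_uniformOn_univ]
  simp [Set.indicator_apply]

theorem smoothMargin_uniformOn_univ (α : ℝ) (m : ι → ℝ) :
    smoothMargin α m (uniformOn Set.univ) =
      -α * Real.log ((Fintype.card ι : ℝ)⁻¹ * ∑ i, Real.exp (-m i / α)) := by
  rw [smoothMargin, integral_uniformOn_univ, smul_eq_mul]

end Uniform

/-- Smooth margin versus empirical margin distribution.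
Let `h : Θ → X → [-1,1]` be a class of base classifiers, `μ` a Borel probability measure
on `Θ`, `S = {(x_j, y_j)}_{j=1}^N` a dataset with labels `y_j ∈ {−1,1}`, and for `α > 0`
let `ψ_α(μ) = −α log((1/N) Σ_j exp(−y_j h_μ(x_j)/α))` be the smooth margin, where
`h_μ(x) = E_{θ∼μ}[h(θ,x)]`.  If `ψ_α(μ) > 0`, then for every `0 < ρ < ψ_α(μ)`,
`(1/N) Σ_j 1[y_j h_μ(x_j) ≤ ρ] ≤ (exp((1−ψ_α(μ))/α) − 1)/(exp((1−ρ)/α) − 1)`. -/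
theorem smooth_margin_bound
    {X Θ : Type*} [MeasurableSpace X] [MeasurableSpace Θ]
    (h : Θ → X → ℝ) (hmeas : Measurable (Function.uncurry h))
    (hbdd : ∀ θ x, h θ x ∈ Set.Icc (-1 : ℝ) 1)
    (μ : Measure Θ) [IsProbabilityMeasure μ]
    (N : ℕ) (hN : 0 < N) (S : Fin N → X × ℝ)
    (hy : ∀ j, (S j).2 = 1 ∨ (S j).2 = -1)
    (α : ℝ) (hα : 0 < α)
    (ψ : ℝ)
    (hψdef : ψ = -α * Real.log ((N : ℝ)⁻¹ *
      ∑ j : Fin N, Real.exp (-((S j).2 * ∫ θ, h θ (S j).1 ∂μ) / α)))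
    (hψpos : 0 < ψ)
    (ρ : ℝ) (hρ0 : 0 < ρ) (hρψ : ρ < ψ) :
    (N : ℝ)⁻¹ * ∑ j : Fin N,
        (if (S j).2 * (∫ θ, h θ (S j).1 ∂μ) ≤ ρ then (1 : ℝ) else 0)
      ≤ (Real.exp ((1 - ψ) / α) - 1) / (Real.exp ((1 - ρ) / α) - 1) := by
  have : NeZero N := ⟨hN.ne'⟩
  let P := ProbabilityTheory.uniformOn (Set.univ : Set (Fin N))
  have h_abs : ∀ θ x, |h θ x| ≤ 1 := fun θ x ↦ abs_le.2 (hbdd θ x)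
  have hS : AEMeasurable S P := (measurable_of_countable S).aemeasurable
  have hlabel : ∀ᵐ j ∂P, |(S j).2| ≤ 1 :=
    ae_of_all P fun j ↦ by rcases hy j with hj | hj <;> simp [hj]
  have hψ : ψ = smoothMargin α (fun j ↦ ensembleMargin h μ (S j)) P := by
    rw [hψdef, smoothMargin_uniformOn_univ, Fintype.card_fin]
    rfl
  have hρ : ρ < 1 :=
    hρψ.trans_le (hψ.trans_le (smoothMargin_ensembleMargin_le_one hmeas h_abs hS hlabel hα))
  have hbound := smooth_margin_bound_general (μ := μ) hmeas h_abs hS hlabel hα hρ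
  rwa [measureReal_uniformOn_univ, Fintype.card_fin, ← hψ] at hbound
end

section
/- Suppose Assumption (Continuity) and Assumption (Smoothness and boundedness) hold. If μ* is a probability measure in the d_F-closure of P₂ that is a local minimum of L_S on P with respect to the metric d_F, then the local optimality condition ‖E_S[s_{μ*}(θ,x,y)]‖_{L²(μ*)} = 0 holds. -/
open MeasureTheory

/-- The infinite ensemble `h_μ(x) = E_{θ∼μ}[h(θ,x)]`. -/
noncomputable def ensemble {d : ℕ} {X : Type*} (h : EuclideanSpace ℝ (Fin d) → X → ℝ)
    (μ : Measure (EuclideanSpace ℝ (Fin d))) (x : X) : ℝ :=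
  ∫ θ, h θ x ∂μ

/-- The stochastic gradient `s_μ(θ,x,y) = −l'(−y h_μ(x)) y ∇_θ h(θ,x)`. -/
noncomputable def smu {d : ℕ} {X : Type*} (l : ℝ → ℝ)
    (h : EuclideanSpace ℝ (Fin d) → X → ℝ) (μ : Measure (EuclideanSpace ℝ (Fin d)))
    (θ : EuclideanSpace ℝ (Fin d)) (x : X) (y : ℝ) : EuclideanSpace ℝ (Fin d) :=
  (-(deriv l (-(y * ensemble h μ x))) * y) • gradient (fun θ' => h θ' x) θ

/-- `E_S[s_μ(θ,x,y)]`, the average of the stochastic gradients over the dataset `S`. -/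
noncomputable def gradS {d : ℕ} {X : Type*} (l : ℝ → ℝ)
    (h : EuclideanSpace ℝ (Fin d) → X → ℝ) (N : ℕ) (S : Fin N → X × ℝ)
    (μ : Measure (EuclideanSpace ℝ (Fin d))) (θ : EuclideanSpace ℝ (Fin d)) :
    EuclideanSpace ℝ (Fin d) :=
  (N : ℝ)⁻¹ • ∑ j : Fin N, smu l h μ θ (S j).1 (S j).2

/-- The empirical risk `L_S(μ) = (1/N) Σ_j l(−y_j h_μ(x_j))`. -/
noncomputable def LS {d : ℕ} {X : Type*} (l : ℝ → ℝ)
    (h : EuclideanSpace ℝ (Fin d) → X → ℝ) (N : ℕ) (S : Fin N → X × ℝ)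
    (μ : Measure (EuclideanSpace ℝ (Fin d))) : ℝ :=
  (N : ℝ)⁻¹ * ∑ j : Fin N, l (-((S j).2 * ensemble h μ (S j).1))

/-- The Hessian `∇²_θ h(θ,x)` as a continuous linear map. -/
noncomputable def hess {d : ℕ} {X : Type*} (h : EuclideanSpace ℝ (Fin d) → X → ℝ)
    (x : X) (θ : EuclideanSpace ℝ (Fin d)) :
    EuclideanSpace ℝ (Fin d) →L[ℝ] EuclideanSpace ℝ (Fin d) :=
  fderiv ℝ (fun θ' => gradient (fun θ'' => h θ'' x) θ') θ

/-- The class `F_C` of functions on `ℝ^d` bounded by `C` and `C`-Lipschitz. -/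
def FC {d : ℕ} (C : ℝ) : Set (EuclideanSpace ℝ (Fin d) → ℝ) :=
  {f | (∀ θ, |f θ| ≤ C) ∧ LipschitzWith (Real.toNNReal C) f}

/-- The integral probability metric `d_F(μ,ν) = sup_{f∈F_C} |∫f dμ − ∫f dν|`. -/
noncomputable def dF {d : ℕ} (C : ℝ) (μ ν : Measure (EuclideanSpace ℝ (Fin d))) : ℝ :=
  ⨆ f : FC (d := d) C, |(∫ θ, f.1 θ ∂μ) - ∫ θ, f.1 θ ∂ν|

/-! Move `μ*` along its own stochastic gradient `g = E_S[s_{μ*}]`, that is, push it forward under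
`θ ↦ θ + t g(θ)`. The integral of a Lipschitz function changes by `O(t)` under this displacement, so
the displaced measures stay `d_F`-close to `μ*` for small `t` and `t ↦ L_S` has a local minimum at
`t = 0`. By the chain rule the derivative of this function at `0` is
`∫ ⟪E_S[s_{μ*}], g⟫ dμ* = ‖E_S[s_{μ*}]‖²_{L²(μ*)}`, which therefore vanishes. -/

open Filter Topology NNReal Gradient RealInnerProductSpace

section Displacement

variable {E : Type*} [NormedAddCommGroup E] [NormedSpace ℝ E] {f : E → ℝ} {K : ℝ≥0}

theorem abs_apply_add_smul_sub_le_of_lipschitz (hf : LipschitzWith K f) (θ v : E) (t : ℝ) :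
    |f (θ + t • v) - f θ| ≤ K * (|t| * ‖v‖) := by
  simpa [Real.dist_eq, dist_eq_norm, norm_smul] using hf.dist_le_mul (θ + t • v) θ

variable [MeasurableSpace E] {μ : Measure E} {g : E → E}

/-- The displacement of `μ` along the vector field `g` for time `t`: the push-forward of `μ` under
`θ ↦ θ + t g(θ)`. As `t` varies, this is the curve of measures that issues from `μ` in the
direction `g`. -/
noncomputable def displacement (μ : Measure E) (g : E → E) (t : ℝ) : Measure E :=
  μ.map fun θ => θ + t • g θ

@[simp]
theorem displacement_zero (μ : Measure E) (g : E → E) : displacement μ g 0 = μ := by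
  simp [displacement]

variable [BorelSpace E] [SecondCountableTopology E]

theorem isProbabilityMeasure_displacement [IsProbabilityMeasure μ] (hg : AEMeasurable g μ)
    (t : ℝ) : IsProbabilityMeasure (displacement μ g t) :=
  Measure.isProbabilityMeasure_map (by fun_prop)

theorem integral_displacement (hf : Continuous f) (hg : AEMeasurable g μ) (t : ℝ) :
    ∫ θ, f θ ∂displacement μ g t = ∫ θ, f (θ + t • g θ) ∂μ :=
  integral_map (by fun_prop) hf.aestronglyMeasurable

theorem abs_integral_displacement_sub_le (hf : LipschitzWith K f) (hfμ : Integrable f μ)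
    (hg : Integrable g μ) (t : ℝ) :
    |∫ θ, f θ ∂displacement μ g t - ∫ θ, f θ ∂μ| ≤ K * (|t| * ∫ θ, ‖g θ‖ ∂μ) := by
  have hbound : Integrable (fun θ => K * (|t| * ‖g θ‖)) μ :=
    (hg.norm.const_mul _).const_mul _
  have hmove : AEMeasurable (fun θ => θ + t • g θ) μ := by
    have := hg.aemeasurable
    fun_prop
  have hdiff : Integrable (fun θ => f (θ + t • g θ) - f θ) μ :=
    hbound.mono' ((hf.continuous.measurable.comp_aemeasurable hmove).aestronglyMeasurable.sub
      hfμ.aestronglyMeasurable)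
      (.of_forall fun θ => abs_apply_add_smul_sub_le_of_lipschitz hf θ (g θ) t)
  have hcomp : Integrable (fun θ => f (θ + t • g θ)) μ := by
    simpa using hdiff.fun_add hfμ
  rw [integral_displacement hf.continuous hg.aemeasurable, ← integral_sub hcomp hfμ]
  calc |∫ θ, (f (θ + t • g θ) - f θ) ∂μ|
      ≤ ∫ θ, |f (θ + t • g θ) - f θ| ∂μ := abs_integral_le_integral_abs
    _ ≤ ∫ θ, K * (|t| * ‖g θ‖) ∂μ :=
        integral_mono hdiff.abs hbound fun θ =>
          abs_apply_add_smul_sub_le_of_lipschitz hf θ (g θ) t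
    _ = K * (|t| * ∫ θ, ‖g θ‖ ∂μ) := by simp only [integral_const_mul]

end Displacement

section Gradient

variable {E : Type*} [NormedAddCommGroup E] [InnerProductSpace ℝ E] [CompleteSpace E]
  {f : E → ℝ} {K : ℝ≥0}

theorem norm_gradient_le_of_lipschitz (hf : LipschitzWith K f) (θ : E) : ‖∇ f θ‖ ≤ K := by
  simpa [gradient] using norm_fderiv_le_of_lipschitz ℝ hf (x₀ := θ)

theorem hasDerivAt_comp_add_smul {θ : E} (hf : DifferentiableAt ℝ f θ) (v : E) :
    HasDerivAt (fun t : ℝ => f (θ + t • v)) ⟪∇ f θ, v⟫ 0 := by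
  have hline : HasDerivAt (fun t : ℝ => θ + t • v) v 0 := by
    simpa using ((hasDerivAt_id (0 : ℝ)).smul_const v).const_add θ
  rw [inner_gradient_left]
  exact HasFDerivAt.comp_hasDerivAt (l := f) (0 : ℝ) (by simpa using hf.hasFDerivAt) hline

variable [MeasurableSpace E] [BorelSpace E]

theorem measurable_gradient (f : E → ℝ) : Measurable (∇ f) :=
  (InnerProductSpace.toDual ℝ E).symm.continuous.measurable.comp (measurable_fderiv ℝ f)

variable [SecondCountableTopology E] {μ : Measure E} {g : E → E}

theorem integrable_gradient [IsFiniteMeasure μ] (hf : LipschitzWith K f) :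
    Integrable (∇ f) μ :=
  .of_bound (measurable_gradient f).aestronglyMeasurable K
    (.of_forall (norm_gradient_le_of_lipschitz hf))

theorem integrable_inner_gradient (hf : LipschitzWith K f) (hg : Integrable g μ) :
    Integrable (fun θ => ⟪∇ f θ, g θ⟫) μ :=
  (hg.norm.const_mul (K : ℝ)).mono'
    ((measurable_gradient f).aestronglyMeasurable.inner hg.aestronglyMeasurable)
    (.of_forall fun θ => (norm_inner_le_norm _ _).trans
      (mul_le_mul_of_nonneg_right (norm_gradient_le_of_lipschitz hf θ) (norm_nonneg _)))

theorem hasDerivAt_integral_displacement (hf : Differentiable ℝ f) (hLip : LipschitzWith K f)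
    (hfμ : Integrable f μ) (hg : Integrable g μ) :
    HasDerivAt (fun t => ∫ θ, f θ ∂displacement μ g t) (∫ θ, ⟪∇ f θ, g θ⟫ ∂μ) 0 := by
  have hgm := hg.aemeasurable
  have hmeas (t : ℝ) : AEStronglyMeasurable (fun θ => f (θ + t • g θ)) μ :=
    (hf.continuous.measurable.comp_aemeasurable (by fun_prop)).aestronglyMeasurable
  have hLip_time (θ : E) : LipschitzWith (Real.nnabs (K * ‖g θ‖)) fun t : ℝ => f (θ + t • g θ) :=
    .of_dist_le_mul fun s t => by
      simpa [dist_eq_norm, ← sub_smul, norm_smul, mul_assoc, mul_comm ‖g θ‖]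
        using hLip.dist_le_mul (θ + s • g θ) (θ + t • g θ)
  simp only [integral_displacement hf.continuous hgm]
  exact (hasDerivAt_integral_of_dominated_loc_of_lip univ_mem (.of_forall hmeas) (by simpa)
    (integrable_inner_gradient hLip hg).aestronglyMeasurable
    (.of_forall fun θ => (hLip_time θ).lipschitzOnWith) (hg.norm.const_mul _)
    (.of_forall fun θ => hasDerivAt_comp_add_smul (hf θ) (g θ))).2

end Gradient

section FunctionClass

variable {d : ℕ} {C : ℝ} {μ : Measure (EuclideanSpace ℝ (Fin d))}
  {g : EuclideanSpace ℝ (Fin d) → EuclideanSpace ℝ (Fin d)}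

theorem integrable_of_mem_FC [IsFiniteMeasure μ] {f : EuclideanSpace ℝ (Fin d) → ℝ}
    (hf : f ∈ FC C) : Integrable f μ :=
  .of_bound hf.2.continuous.aestronglyMeasurable C (.of_forall hf.1)

theorem dF_displacement_le [IsFiniteMeasure μ] (hC : 0 ≤ C) (hg : Integrable g μ) (t : ℝ) :
    dF C (displacement μ g t) μ ≤ C * (|t| * ∫ θ, ‖g θ‖ ∂μ) := by
  refine Real.iSup_le (fun ⟨f, hf⟩ => ?_) (by positivity)
  simpa only [Real.coe_toNNReal C hC] using
    abs_integral_displacement_sub_le hf.2 (integrable_of_mem_FC hf) hg t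

theorem eventually_dF_displacement_lt [IsFiniteMeasure μ] (hC : 0 ≤ C) (hg : Integrable g μ)
    {δ : ℝ} (hδ : 0 < δ) : ∀ᶠ t in 𝓝 0, dF C (displacement μ g t) μ < δ := by
  have hlim : Tendsto (fun t : ℝ => C * (|t| * ∫ θ, ‖g θ‖ ∂μ)) (𝓝 0) (𝓝 0) :=
    Continuous.tendsto' (by fun_prop) _ _ (by simp)
  filter_upwards [hlim.eventually_lt_const hδ] with t ht
  exact (dF_displacement_le hC hg t).trans_lt ht

theorem isLocalMin_displacement [IsProbabilityMeasure μ] (hC : 0 ≤ C) (hg : Integrable g μ)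
    {L : Measure (EuclideanSpace ℝ (Fin d)) → ℝ} {δ : ℝ} (hδ : 0 < δ)
    (hmin : ∀ ν : Measure (EuclideanSpace ℝ (Fin d)), IsProbabilityMeasure ν →
      dF C ν μ < δ → L μ ≤ L ν) :
    IsLocalMin (fun t => L (displacement μ g t)) 0 := by
  filter_upwards [eventually_dF_displacement_lt hC hg hδ] with t ht
  simpa only [displacement_zero] using
    hmin _ (isProbabilityMeasure_displacement hg.aemeasurable t) ht

end FunctionClass

section Risk

variable {d : ℕ} {X : Type*} {l : ℝ → ℝ} {h : EuclideanSpace ℝ (Fin d) → X → ℝ} {N : ℕ}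
  {S : Fin N → X × ℝ} {μ : Measure (EuclideanSpace ℝ (Fin d))}
  {g : EuclideanSpace ℝ (Fin d) → EuclideanSpace ℝ (Fin d)}

theorem integrable_gradS [IsFiniteMeasure μ]
    (hF : ∀ x, ∃ K, (fun θ => h θ x) ∈ FC K) : Integrable (gradS l h N S μ) μ :=
  (integrable_finsetSum _ fun j _ =>
    have ⟨_, hK⟩ := hF (S j).1
    (integrable_gradient hK.2).fun_smul _).fun_smul _

theorem inner_gradS (θ v : EuclideanSpace ℝ (Fin d)) :
    ⟪gradS l h N S μ θ, v⟫ = (N : ℝ)⁻¹ * ∑ j, -deriv l (-((S j).2 * ensemble h μ (S j).1)) *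
      (S j).2 * ⟪∇ (fun θ' => h θ' (S j).1) θ, v⟫ := by
  simp only [gradS, smu, real_inner_smul_left, sum_inner]

theorem integral_inner_gradS (hF : ∀ x, ∃ K, (fun θ => h θ x) ∈ FC K) (hg : Integrable g μ) :
    ∫ θ, ⟪gradS l h N S μ θ, g θ⟫ ∂μ =
      (N : ℝ)⁻¹ * ∑ j, -deriv l (-((S j).2 * ensemble h μ (S j).1)) * (S j).2 *
        ∫ θ, ⟪∇ (fun θ' => h θ' (S j).1) θ, g θ⟫ ∂μ := by
  have hint (j : Fin N) : Integrable (fun θ => ⟪∇ (fun θ' => h θ' (S j).1) θ, g θ⟫) μ :=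
    have ⟨_, hK⟩ := hF (S j).1
    integrable_inner_gradient hK.2 hg
  simp only [inner_gradS, integral_const_mul,
    integral_finsetSum _ fun j _ => (hint j).const_mul _]

theorem hasDerivAt_LS_displacement [IsFiniteMeasure μ] (hl : Differentiable ℝ l)
    (hd : ∀ x, Differentiable ℝ fun θ => h θ x) (hF : ∀ x, ∃ K, (fun θ => h θ x) ∈ FC K)
    (hg : Integrable g μ) :
    HasDerivAt (fun t => LS l h N S (displacement μ g t))
      (∫ θ, ⟪gradS l h N S μ θ, g θ⟫ ∂μ) 0 := by
  rw [integral_inner_gradS hF hg]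
  refine (HasDerivAt.fun_sum fun j _ => ?_).const_mul _
  obtain ⟨x, y⟩ := S j
  obtain ⟨_, hK⟩ := hF x
  have hens : HasDerivAt (fun t => ensemble h (displacement μ g t) x)
      (∫ θ, ⟪∇ (fun θ' => h θ' x) θ, g θ⟫ ∂μ) 0 :=
    hasDerivAt_integral_displacement (hd x) hK.2 (integrable_of_mem_FC hK) hg
  have hloss := HasDerivAt.comp_of_eq (0 : ℝ) (hl (-(y * ensemble h μ x))).hasDerivAt
    (hens.const_mul y).fun_neg (by simp)
  exact hloss.congr_deriv (by ring)

end Risk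

theorem necessary_local_optimality_general
    {d : ℕ} {X : Type*} {C : ℝ} (hC : 0 ≤ C) {l : ℝ → ℝ} (hl : Differentiable ℝ l)
    {h : EuclideanSpace ℝ (Fin d) → X → ℝ} (hd : ∀ x, Differentiable ℝ fun θ => h θ x)
    (hF : ∀ x, ∃ K, (fun θ => h θ x) ∈ FC K) {N : ℕ} {S : Fin N → X × ℝ}
    {μ : Measure (EuclideanSpace ℝ (Fin d))} [IsProbabilityMeasure μ]
    (hmin : ∃ δ : ℝ, 0 < δ ∧ ∀ ν : Measure (EuclideanSpace ℝ (Fin d)),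
      IsProbabilityMeasure ν → dF C ν μ < δ → LS l h N S μ ≤ LS l h N S ν) :
    Real.sqrt (∫ θ, ‖gradS l h N S μ θ‖ ^ 2 ∂μ) = 0 := by
  obtain ⟨δ, hδ, hmin⟩ := hmin
  have hgrad : Integrable (gradS l h N S μ) μ := integrable_gradS hF
  have hcrit : ∫ θ, ⟪gradS l h N S μ θ, gradS l h N S μ θ⟫ ∂μ = 0 :=
    (isLocalMin_displacement hC hgrad hδ hmin).hasDerivAt_eq_zero
      (hasDerivAt_LS_displacement hl hd hF hgrad)
  simpa only [real_inner_self_eq_norm_sq, Real.sqrt_eq_zero'] using hcrit.le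

/-- Necessary local optimality condition.  Under the continuity and the
smoothness/boundedness assumptions, if `μ*` lies in the `d_F`-closure of `P₂` and is a
local minimum of `L_S` on `P` with respect to `d_F`, then
`‖E_S[s_{μ*}(θ,x,y)]‖_{L²(μ*)} = 0`. -/
theorem necessary_local_optimality
    {d : ℕ} {X : Type*} (C : ℝ) (hC : 0 < C)
    (l : ℝ → ℝ) (hl : ContDiff ℝ 2 l)
    (h : EuclideanSpace ℝ (Fin d) → X → ℝ)
    (hbdd : ∀ θ x, h θ x ∈ Set.Icc (-1 : ℝ) 1)
    (hC2 : ∀ x : X, ContDiff ℝ 2 (fun θ => h θ x))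
    (B : ℝ)
    (hB : ∀ (θ : EuclideanSpace ℝ (Fin d)) (x : X),
      ‖gradient (fun θ' => h θ' x) θ‖ ≤ B ∧ ‖hess h x θ‖ ≤ B)
    (N : ℕ) (hN : 0 < N) (S : Fin N → X × ℝ)
    (hy : ∀ j, (S j).2 = 1 ∨ (S j).2 = -1)
    -- Assumption (Continuity)
    (hFCh : ∀ x : X, (fun θ => h θ x) ∈ FC (d := d) C)
    (hFCs : ∀ μ : Measure (EuclideanSpace ℝ (Fin d)), IsProbabilityMeasure μ →
      (fun θ => ‖gradS l h N S μ θ‖ ^ 2) ∈ FC (d := d) C)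
    (μstar : Measure (EuclideanSpace ℝ (Fin d))) [IsProbabilityMeasure μstar]
    -- `μ*` lies in the `d_F`-closure of `P₂`
    (hclosure : ∀ ε : ℝ, 0 < ε →
      ∃ μ : Measure (EuclideanSpace ℝ (Fin d)), IsProbabilityMeasure μ ∧
        Integrable (fun θ => ‖θ‖ ^ 2) μ ∧ dF C μ μstar < ε)
    -- `μ*` is a local minimum of `L_S` with respect to `d_F`
    (hlocmin : ∃ δ : ℝ, 0 < δ ∧
      ∀ μ : Measure (EuclideanSpace ℝ (Fin d)), IsProbabilityMeasure μ →
        dF C μ μstar < δ → LS l h N S μstar ≤ LS l h N S μ) :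
    Real.sqrt (∫ θ, ‖gradS l h N S μstar θ‖ ^ 2 ∂μstar) = 0 := by
  exact necessary_local_optimality_general hC.le (hl.differentiable two_ne_zero)
    (fun x => (hC2 x).differentiable two_ne_zero) (fun x => ⟨C, hFCh x⟩) hlocmin
end
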